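/- arXiv:1003.5289 — 2 statements merged into one kernel-verified Lean document; each statement's English description precedes it below -/
import Mathlib

section
/- For the Weierstrass zeta function of the lattice L_ω = ω·ℤ[τ] with invariants g₂ = 0, g₃ = 1, one has ζ(ω/6, L_ω) = π/(3√3·ω) − 1/√3 − √3/(∛2 − 2). -/
noncomputable section

open Complex Real ComplexConjugate

/-- `τ = (−1+√−3)/2`, a primitive cube root of unity. -/
def tau : ℂ := (-1 + Real.sqrt 3 * Complex.I) / 2

/-- `√−3 = 1 + 2τ`, the square root of `−3` with positive imaginary part. -/
def sqrtm3 : ℂ := Real.sqrt 3 * Complex.I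

/-- The ring of integers `O_K = ℤ[τ]` of `K = ℚ(√−3)`, as a subring of `ℂ`. -/
def Eis : Subring ℂ := Subring.closure {tau}

/-- `τ` as an element of `ℤ[τ]`. -/
def tauO : Eis := ⟨tau, Subring.subset_closure rfl⟩

/-- `√−3` as an element of `ℤ[τ]`. -/
def sqrtm3O : Eis := 1 + 2 * tauO

/-- Membership in the lattice `L_ω = ω·ℤ[τ]`. -/
def inLattice (ω : ℝ) (z : ℂ) : Prop := ∃ a : Eis, z = (ω : ℂ) * a

/-- The Weierstrass `℘`-function of the lattice `L_ω = ω·ℤ[τ]`. -/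
def wp (ω : ℝ) (z : ℂ) : ℂ :=
  1 / z ^ 2 + ∑' a : {w : ℂ // inLattice ω w ∧ w ≠ 0},
    (1 / (z - (a : ℂ)) ^ 2 - 1 / (a : ℂ) ^ 2)

/-- The Weierstrass `ζ`-function of the lattice `L_ω = ω·ℤ[τ]`. -/
def wzeta (ω : ℝ) (z : ℂ) : ℂ :=
  1 / z + ∑' a : {w : ℂ // inLattice ω w ∧ w ≠ 0},
    (1 / (z - (a : ℂ)) + 1 / (a : ℂ) + z / (a : ℂ) ^ 2)

/-- The real cube root of 2, as a complex number. -/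
def cbrt2 : ℂ := ((2 : ℝ) ^ ((1 : ℝ) / 3) : ℝ)

/-- The real cube root of 4, as a complex number. -/
def cbrt4 : ℂ := ((4 : ℝ) ^ ((1 : ℝ) / 3) : ℝ)



namespace WZ

open Filter Topology

/-- The regular part at `0` of the Weierstrass zeta function. -/
def zReg (L : PeriodPair) (z : ℂ) : ℂ :=
  ∑' l : L.lattice, if l.1 = 0 then 0 else (1 / (z - l.1) + 1 / l.1 + z / l.1 ^ 2)

/-- The Weierstrass zeta function of a period pair. -/
def zeta (L : PeriodPair) (z : ℂ) : ℂ := 1 / z + zReg L z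

lemma zeta_bound (r : ℝ) (hr : 0 < r) (s : ℂ) (hs : ‖s‖ < r) (l : ℂ) (h : 2 * r ≤ ‖l‖) :
    ‖1 / (s - l) + 1 / l + s / l ^ 2‖ ≤ 2 * r ^ 2 * ‖l‖ ^ (-3 : ℝ) := by
  have h1 : s ≠ l := by rintro rfl; linarith
  have h2 : 0 < ‖l‖ := by linarith
  have h3 : l ≠ 0 := norm_pos_iff.mp h2
  have h4 : s - l ≠ 0 := sub_ne_zero.mpr h1
  have e : 1 / (s - l) + 1 / l + s / l ^ 2 = s ^ 2 / ((s - l) * l ^ 2) := by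
    field_simp; ring
  rw [e]
  have e2 : ‖l‖ / 2 ≤ ‖s - l‖ := by
    rw [norm_sub_rev]
    exact .trans (by linarith) (norm_sub_norm_le l s)
  calc _ = ‖s‖ ^ 2 / (‖s - l‖ * ‖l‖ ^ 2) := by simp
    _ ≤ r ^ 2 / (‖l‖ / 2 * ‖l‖ ^ 2) := by gcongr
    _ = 2 * r ^ 2 / ‖l‖ ^ 3 := by field_simp
    _ = _ := by norm_cast

lemma zReg_hasSumLU (L : PeriodPair) :
    HasSumLocallyUniformly (fun (l : L.lattice) (z : ℂ) ↦
      if l.1 = 0 then 0 else (1 / (z - l.1) + 1 / l.1 + z / l.1 ^ 2)) (zReg L) := by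
  refine L.hasSumLocallyUniformly_aux (u := fun r l ↦ (2 * r ^ 2 * ‖l‖ ^ (-3 : ℝ))) _
    (fun _ _ ↦ (ZLattice.summable_norm_rpow _ _ (by simp; norm_num)).mul_left _) fun r hr ↦
    Filter.eventually_atTop.mpr ⟨2 * r, ?_⟩
  rintro _ h s hs l rfl
  split_ifs
  · simp only [norm_zero]; positivity
  · exact zeta_bound r hr s hs l h

lemma term_hasDerivAt (l z : ℂ) (h : z ≠ l) :
    HasDerivAt (fun z : ℂ ↦ 1 / (z - l) + 1 / l + z / l ^ 2)
      (-(1 / (z - l) ^ 2 - 1 / l ^ 2)) z := by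
  have h4 : z - l ≠ 0 := sub_ne_zero.mpr h
  have h1 : HasDerivAt (fun z : ℂ ↦ (z - l)⁻¹) (-1 / (z - l) ^ 2) z :=
    ((hasDerivAt_id z).sub_const l).inv h4
  have h2 : HasDerivAt (fun z : ℂ ↦ z / l ^ 2) (1 / l ^ 2) z := (hasDerivAt_id z).div_const _
  have h3 := (h1.add_const (1 / l)).add h2
  refine (h3.congr_deriv ?_).congr_of_eventuallyEq (Eventually.of_forall fun x ↦ ?_)
  · ring
  · simp

lemma zReg_hasDerivAt (L : PeriodPair) (z : ℂ) (hz : z ∈ ((L.lattice : Set ℂ) \ {0})ᶜ) :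
    HasDerivAt (zReg L) (-(L.weierstrassPExcept 0 z)) z := by
  have key : ∀ (i : L.lattice) (x : ℂ), x ∈ ((L.lattice : Set ℂ) \ {0})ᶜ →
    HasDerivAt (fun z : ℂ ↦ if i.1 = 0 then 0 else (1 / (z - i.1) + 1 / i.1 + z / i.1 ^ 2))
      (-(if i.1 = 0 then 0 else (1 / (x - i.1) ^ 2 - 1 / i.1 ^ 2))) x := by
    intro i x hx
    by_cases hi : i.1 = 0
    · simp only [hi, if_true, neg_zero]
      exact hasDerivAt_const _ _
    · simp only [hi, if_false]
      apply term_hasDerivAt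
      rintro rfl
      exact hx ⟨i.2, hi⟩
  have hd : DifferentiableOn ℂ (zReg L) ((L.lattice : Set ℂ) \ {0})ᶜ := by
    refine (zReg_hasSumLU L).hasSumLocallyUniformlyOn.differentiableOn
      (.of_forall fun s ↦ .fun_sum fun i hi ↦ ?_) L.isOpen_compl_lattice_sdiff
    exact fun x hx ↦ (key i x hx).differentiableAt.differentiableWithinAt
  have h1 : Set.EqOn (deriv (zReg L)) (fun z ↦ -(L.weierstrassPExcept 0 z))
      ((L.lattice : Set ℂ) \ {0})ᶜ := by
    refine ((zReg_hasSumLU L).tendstoLocallyUniformlyOn.deriv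
      (.of_forall fun s ↦ ?_) L.isOpen_compl_lattice_sdiff).unique ?_
    · refine .fun_sum fun i hi ↦ ?_
      exact fun x hx ↦ (key i x hx).differentiableAt.differentiableWithinAt
    · refine TendstoLocallyUniformlyOn.congr
        (L.hasSumLocallyUniformly_weierstrassPExcept 0).tendstoLocallyUniformlyOn.fun_neg ?_
      intro s x hx
      simp only [Function.comp_apply]
      rw [deriv_fun_sum (fun i _ ↦ (key i x hx).differentiableAt)]
      simp only [(key _ x hx).deriv]
      simp
  have h2 : deriv (zReg L) z = -(L.weierstrassPExcept 0 z) := h1 hz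
  rw [← h2]
  exact (hd.differentiableAt (L.isOpen_compl_lattice_sdiff.mem_nhds hz)).hasDerivAt

lemma wpExcept_zero (L : PeriodPair) (z : ℂ) :
    L.weierstrassP z = L.weierstrassPExcept 0 z + 1 / z ^ 2 := by
  have := L.weierstrassPExcept_add 0 z
  simpa using this.symm

lemma zeta_hasDerivAt (L : PeriodPair) (z : ℂ) (hz : z ∉ L.lattice) :
    HasDerivAt (zeta L) (-(L.weierstrassP z)) z := by
  have h0 : z ≠ 0 := by rintro rfl; exact hz (zero_mem _)
  have h1 := (hasDerivAt_inv h0).add (zReg_hasDerivAt L z (fun h ↦ hz h.1))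
  refine (h1.congr_deriv ?_).congr_of_eventuallyEq (Eventually.of_forall fun x ↦ ?_)
  · rw [wpExcept_zero]; ring
  · simp [zeta]

lemma zReg_zero (L : PeriodPair) : zReg L 0 = 0 := by
  unfold zReg
  simp

/-- Transformation of `zReg` under a similarity of the lattice. -/
lemma zReg_smul (L : PeriodPair) (e : ℂ) (he0 : e ≠ 0) (he : ∀ l, e * l ∈ L.lattice ↔ l ∈ L.lattice)
    (z : ℂ) : zReg L (e * z) = e⁻¹ * zReg L z := by
  let E : L.lattice ≃ L.lattice :=
    { toFun := fun l ↦ ⟨e * l.1, (he _).2 l.2⟩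
      invFun := fun l ↦ ⟨e⁻¹ * l.1, (he _).1 (by rw [mul_inv_cancel_left₀ he0]; exact l.2)⟩
      left_inv := fun l ↦ by ext; simp [he0]
      right_inv := fun l ↦ by ext; simp [he0] }
  unfold zReg
  rw [← E.tsum_eq, ← tsum_mul_left]
  congr with l
  simp only [E, Equiv.coe_fn_mk, mul_eq_zero, he0, false_or]
  split_ifs with h
  · simp
  · rw [← mul_sub]
    simp only [mul_inv, mul_pow, div_eq_mul_inv]
    field_simp

lemma zeta_smul (L : PeriodPair) (e : ℂ) (he0 : e ≠ 0) (he : ∀ l, e * l ∈ L.lattice ↔ l ∈ L.lattice)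
    (z : ℂ) : zeta L (e * z) = e⁻¹ * zeta L z := by
  unfold zeta
  rw [zReg_smul L e he0 he]
  simp only [one_div, mul_inv]
  ring

lemma zeta_neg (L : PeriodPair) (z : ℂ) : zeta L (-z) = - zeta L z := by
  have := zeta_smul L (-1) (by norm_num) (by simp) z
  simpa [inv_neg] using this


/-- complex conjugation on the lattice -/
def conjEquiv (L : PeriodPair) (hc : ∀ l, conj l ∈ L.lattice ↔ l ∈ L.lattice) : L.lattice ≃ L.lattice :=
    { toFun := fun l ↦ ⟨conj l.1, (hc _).2 l.2⟩
      invFun := fun l ↦ ⟨conj l.1, (hc _).2 l.2⟩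
      left_inv := fun l ↦ by ext; simp
      right_inv := fun l ↦ by ext; simp }

lemma zeta_conj (L : PeriodPair) (hc : ∀ l, conj l ∈ L.lattice ↔ l ∈ L.lattice)
    (z : ℂ) : zeta L (conj z) = conj (zeta L z) := by
  unfold zeta zReg
  rw [map_add, Complex.conj_tsum, ← (conjEquiv L hc).tsum_eq]
  congr 1
  · simp
  congr with l
  simp only [conjEquiv, Equiv.coe_fn_mk, map_eq_zero]
  split_ifs <;> simp

lemma wp_conj (L : PeriodPair) (hc : ∀ l, conj l ∈ L.lattice ↔ l ∈ L.lattice)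
    (z : ℂ) : L.weierstrassP (conj z) = conj (L.weierstrassP z) := by
  unfold PeriodPair.weierstrassP
  rw [Complex.conj_tsum, ← (conjEquiv L hc).tsum_eq]
  congr with l
  simp [conjEquiv]

lemma wp'_conj (L : PeriodPair) (hc : ∀ l, conj l ∈ L.lattice ↔ l ∈ L.lattice)
    (z : ℂ) : L.derivWeierstrassP (conj z) = conj (L.derivWeierstrassP z) := by
  unfold PeriodPair.derivWeierstrassP
  rw [map_neg, Complex.conj_tsum, ← (conjEquiv L hc).tsum_eq]
  congr with l
  simp only [conjEquiv, Equiv.coe_fn_mk, map_div₀, map_pow, map_sub, map_ofNat]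

lemma isPreconnected_compl (L : PeriodPair) : IsPreconnected ((L.lattice : Set ℂ)ᶜ) := by
  have : Countable L.lattice := L.latticeEquivProd.toEquiv.countable_iff.mpr inferInstance
  have h : (L.lattice : Set ℂ).Countable := Set.countable_coe_iff.mp this
  exact (h.isConnected_compl_of_one_lt_rank (by simp)).isPreconnected

lemma zeta_quasi (L : PeriodPair) (l : ℂ) (hl : l ∈ L.lattice) :
    ∃ η : ℂ, ∀ z, z ∉ L.lattice → zeta L (z + l) = zeta L z + η := by
  have hmem : ∀ z, z ∉ L.lattice → z + l ∉ L.lattice := fun z hz h ↦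
    hz (by simpa using sub_mem h hl)
  have hder : ∀ z, z ∉ L.lattice → HasDerivAt (fun z ↦ zeta L (z + l) - zeta L z) 0 z := by
    intro z hz
    have h1 := ((zeta_hasDerivAt L (z + l) (hmem z hz)).comp_add_const z l).sub
      (zeta_hasDerivAt L z hz)
    refine h1.congr_deriv ?_
    have := L.weierstrassP_add_coe z ⟨l, hl⟩
    simp only at this
    rw [this]; ring
  obtain ⟨η, hη⟩ := L.isClosed_lattice.isOpen_compl.exists_is_const_of_deriv_eq_zero
    (isPreconnected_compl L)
    (fun z hz ↦ (hder z hz).differentiableAt.differentiableWithinAt)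
    (fun z hz ↦ (hder z hz).deriv)
  refine ⟨η, fun z hz ↦ ?_⟩
  rw [← hη z hz]; ring

/-- The Frobenius-Stickelberger expression. -/
def fs (L : PeriodPair) (w z : ℂ) : ℂ :=
  (zeta L (z + w) - zeta L z - zeta L w) ^ 2 -
    L.weierstrassP z - L.weierstrassP w - L.weierstrassP (z + w)

open Classical in
/-- The Frobenius-Stickelberger expression, with zeros at the singular points. -/
def fsR (L : PeriodPair) (w z : ℂ) : ℂ :=
  if z ∈ L.lattice ∨ z + w ∈ L.lattice then 0 else fs L w z

lemma fsR_add_mem (L : PeriodPair) (w z l : ℂ) (hl : l ∈ L.lattice) :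
    fsR L w (z + l) = fsR L w z := by
  have h1 : ∀ x, x + l ∈ L.lattice ↔ x ∈ L.lattice := fun x ↦
    L.lattice.toAddSubgroup.add_mem_cancel_right (y := x) hl
  have e : z + l + w = z + w + l := by ring
  have hi : (z + l ∈ L.lattice ∨ z + l + w ∈ L.lattice) ↔
      (z ∈ L.lattice ∨ z + w ∈ L.lattice) := by
    rw [e, h1, h1]
  unfold fsR
  by_cases h : z ∈ L.lattice ∨ z + w ∈ L.lattice
  · rw [if_pos h, if_pos (hi.mpr h)]
  · rw [if_neg h, if_neg (fun h' ↦ h (hi.mp h'))]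
    push Not at h
    obtain ⟨η, hη⟩ := zeta_quasi L l hl
    have p : ∀ x, L.weierstrassP (x + l) = L.weierstrassP x := fun x ↦
      L.weierstrassP_add_coe x ⟨l, hl⟩
    unfold fs
    rw [e, hη _ h.1, hη _ h.2, p, p]
    ring

lemma fsR_symm (L : PeriodPair) (w z : ℂ) : fsR L w (-w - z) = fsR L w z := by
  have e1 : -w - z = -(z + w) := by ring
  have e2 : -w - z + w = -z := by ring
  have hi : (-w - z ∈ L.lattice ∨ -w - z + w ∈ L.lattice) ↔
      (z ∈ L.lattice ∨ z + w ∈ L.lattice) := by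
    rw [e2, e1, neg_mem_iff, neg_mem_iff, or_comm]
  unfold fsR
  by_cases h : z ∈ L.lattice ∨ z + w ∈ L.lattice
  · rw [if_pos h, if_pos (hi.mpr h)]
  · rw [if_neg h, if_neg (fun h' ↦ h (hi.mp h'))]
    unfold fs
    rw [e2, e1, zeta_neg, zeta_neg, L.weierstrassP_neg, L.weierstrassP_neg]
    ring

lemma fs_differentiableAt (L : PeriodPair) (w z : ℂ) (hz : z ∉ L.lattice) (hzw : z + w ∉ L.lattice) :
    DifferentiableAt ℂ (fs L w) z := by
  have o := L.isClosed_lattice.isOpen_compl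
  have d1 := (zeta_hasDerivAt L z hz).differentiableAt
  have d2 := ((zeta_hasDerivAt L (z + w) hzw).comp_add_const z w).differentiableAt
  have d3 := L.differentiableOn_weierstrassP.differentiableAt (o.mem_nhds hz)
  have d4 : DifferentiableAt ℂ (fun z ↦ L.weierstrassP (z + w)) z :=
    DifferentiableAt.comp z (L.differentiableOn_weierstrassP.differentiableAt (o.mem_nhds hzw))
      (by fun_prop)
  unfold fs
  fun_prop

lemma fsR_differentiableAt (L : PeriodPair) (w z : ℂ)
    (hz : z ∉ L.lattice) (hzw : z + w ∉ L.lattice) :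
    DifferentiableAt ℂ (fsR L w) z := by
  have o := L.isClosed_lattice.isOpen_compl
  refine (fs_differentiableAt L w z hz hzw).congr_of_eventuallyEq ?_
  have h2 : ∀ᶠ x in 𝓝 z, x + w ∈ (L.lattice : Set ℂ)ᶜ :=
    (continuous_add_const w).continuousAt.eventually (o.mem_nhds hzw)
  filter_upwards [o.mem_nhds hz, h2] with x h1 h2
  have h1' : x ∉ L.lattice := h1
  have h2' : x + w ∉ L.lattice := h2
  simp [fsR, h1', h2']

lemma punct (L : PeriodPair) (w : ℂ) (hw : w ∉ L.lattice) :
    ∀ᶠ x in 𝓝[≠] (0 : ℂ), x ∉ L.lattice ∧ x + w ∉ L.lattice := by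
  have o := L.isClosed_lattice.isOpen_compl
  have h2 : ∀ᶠ x in 𝓝 (0 : ℂ), x + w ∈ (L.lattice : Set ℂ)ᶜ :=
    (continuous_add_const w).continuousAt.eventually (o.mem_nhds (by simpa using hw))
  filter_upwards [self_mem_nhdsWithin, mem_nhdsWithin_of_mem_nhds
    (L.compl_lattice_sdiff_singleton_mem_nhds 0), mem_nhdsWithin_of_mem_nhds h2] with x h0 h1 h2
  exact ⟨fun h ↦ h1 ⟨h, h0⟩, h2⟩

lemma fsR_zero (L : PeriodPair) (w : ℂ) : fsR L w 0 = 0 := by simp [fsR]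

lemma fsR_tendsto (L : PeriodPair) (w : ℂ) (hw : w ∉ L.lattice) :
    Tendsto (fsR L w) (𝓝[≠] 0) (𝓝 0) := by
  have o := L.isClosed_lattice.isOpen_compl
  have hw0 : (0 : ℂ) + w ∉ L.lattice := by simpa using hw
  let k : ℂ → ℂ := fun z ↦ zeta L (z + w) - zeta L w - zReg L z
  have hk0 : k 0 = 0 := by simp [k, zReg_zero]
  have hk : HasDerivAt k (-(L.weierstrassP w)) 0 := by
    have h1 := (((zeta_hasDerivAt L (0 + w) hw0).comp_add_const 0 w).sub_const (zeta L w)).sub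
      (zReg_hasDerivAt L 0 (by simp))
    refine h1.congr_deriv ?_
    simp
  have hks : Tendsto (fun z ↦ k z / z) (𝓝[≠] 0) (𝓝 (-(L.weierstrassP w))) := by
    have := hk.tendsto_slope
    refine this.congr fun z ↦ ?_
    simp [slope, hk0, div_eq_inv_mul]
  have hkc : Tendsto k (𝓝[≠] 0) (𝓝 0) := by
    have := hk.continuousAt.tendsto
    rw [hk0] at this
    exact this.mono_left nhdsWithin_le_nhds
  have he : Tendsto (L.weierstrassPExcept 0) (𝓝[≠] 0) (𝓝 0) := by
    have h := ((L.differentiableOn_weierstrassPExcept 0).differentiableAt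
      (L.compl_lattice_sdiff_singleton_mem_nhds 0)).continuousAt.tendsto
    rw [L.weierstrassPExcept_zero] at h
    exact h.mono_left nhdsWithin_le_nhds
  have hp : Tendsto (fun z ↦ L.weierstrassP (z + w)) (𝓝[≠] 0) (𝓝 (L.weierstrassP w)) := by
    have h : ContinuousAt (fun z ↦ L.weierstrassP (z + w)) 0 :=
      (DifferentiableAt.comp 0 (L.differentiableOn_weierstrassP.differentiableAt
        (o.mem_nhds hw0)) (by fun_prop)).continuousAt
    have h' := h.tendsto
    simp only [zero_add] at h'
    exact h'.mono_left nhdsWithin_le_nhds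
  have main : Tendsto (fun z ↦ k z ^ 2 - 2 * (k z / z) - L.weierstrassPExcept 0 z
      - L.weierstrassP w - L.weierstrassP (z + w)) (𝓝[≠] 0)
      (𝓝 (0 ^ 2 - 2 * (-(L.weierstrassP w)) - 0 - L.weierstrassP w - L.weierstrassP w)) :=
    ((((hkc.pow 2).sub (hks.const_mul 2)).sub he).sub_const _).sub hp
  have e0 : (0 ^ 2 - 2 * (-(L.weierstrassP w)) - 0 - L.weierstrassP w - L.weierstrassP w) = 0 := by
    ring
  rw [e0] at main
  refine main.congr' ?_
  filter_upwards [punct L w hw, self_mem_nhdsWithin] with z hz hz0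
  have hz0' : z ≠ 0 := hz0
  simp only [fsR, hz.1, hz.2, or_self, if_false, fs, wpExcept_zero L z, k, zeta]
  field_simp
  ring

lemma fsR_differentiableAt_zero (L : PeriodPair) (w : ℂ) (hw : w ∉ L.lattice) :
    DifferentiableAt ℂ (fsR L w) 0 := by
  apply AnalyticAt.differentiableAt
  apply Complex.analyticAt_of_differentiable_on_punctured_nhds_of_continuousAt
  · filter_upwards [punct L w hw] with z hz using fsR_differentiableAt L w z hz.1 hz.2
  · rw [continuousAt_iff_punctured_nhds, fsR_zero]
    exact fsR_tendsto L w hw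

lemma fsR_differentiable (L : PeriodPair) (w : ℂ) (hw : w ∉ L.lattice) :
    Differentiable ℂ (fsR L w) := by
  have hlat : ∀ z, z ∈ L.lattice → DifferentiableAt ℂ (fsR L w) z := by
    intro z hz
    have h1 : DifferentiableAt ℂ (fun x ↦ fsR L w (x + -z)) z := by
      have h0 := fsR_differentiableAt_zero L w hw
      rw [← add_neg_cancel z] at h0
      exact DifferentiableAt.comp (f := fun x : ℂ ↦ x + -z) z h0 (by fun_prop)
    exact h1.congr_of_eventuallyEq (Eventually.of_forall fun x ↦
      (fsR_add_mem L w x (-z) (neg_mem hz)).symm)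
  intro z
  by_cases hz : z ∈ L.lattice
  · exact hlat z hz
  by_cases hzw : z + w ∈ L.lattice
  · have h0 := hlat (-w - z) (by
      have := neg_mem hzw
      rwa [show -w - z = -(z + w) by ring])
    have h1 : DifferentiableAt ℂ (fun x ↦ fsR L w (-w - x)) z :=
      DifferentiableAt.comp z h0 (by fun_prop)
    exact h1.congr_of_eventuallyEq (Eventually.of_forall fun x ↦ (fsR_symm L w x).symm)
  · exact fsR_differentiableAt L w z hz hzw

/-- Frobenius-Stickelberger. -/
lemma fs_eq_zero (L : PeriodPair) (w z : ℂ) (hw : w ∉ L.lattice) (hz : z ∉ L.lattice)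
    (hzw : z + w ∉ L.lattice) : fs L w z = 0 := by
  have d := fsR_differentiable L w hw
  have h := d.apply_eq_apply_of_bounded (IsZLattice.isCompact_range_of_periodic L.lattice _
    d.continuous fun z l hl ↦ fsR_add_mem L w z l hl).isBounded z 0
  rw [fsR_zero] at h
  simpa [fsR, hz, hzw] using h

lemma wp_hasDerivAt (L : PeriodPair) (z : ℂ) (hz : z ∉ L.lattice) :
    HasDerivAt L.weierstrassP (L.derivWeierstrassP z) z := by
  rw [← L.deriv_weierstrassP]
  exact (L.differentiableOn_weierstrassP.differentiableAt
    (L.isClosed_lattice.isOpen_compl.mem_nhds hz)).hasDerivAt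

lemma wp'_hasDerivAt (L : PeriodPair) (z : ℂ) (hz : z ∉ L.lattice) :
    HasDerivAt L.derivWeierstrassP (deriv L.derivWeierstrassP z) z :=
  (L.differentiableOn_derivWeierstrassP.differentiableAt
    (L.isClosed_lattice.isOpen_compl.mem_nhds hz)).hasDerivAt

lemma ev_notMem (L : PeriodPair) (w z : ℂ) (hz : z ∉ L.lattice) (hzw : z + w ∉ L.lattice) :
    ∀ᶠ x in 𝓝 z, x ∉ L.lattice ∧ x + w ∉ L.lattice := by
  have o := L.isClosed_lattice.isOpen_compl
  have h2 : ∀ᶠ x in 𝓝 z, x + w ∈ (L.lattice : Set ℂ)ᶜ :=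
    (continuous_add_const w).continuousAt.eventually (o.mem_nhds hzw)
  filter_upwards [o.mem_nhds hz, h2] with x h1 h2 using ⟨h1, h2⟩

/-- The addition formula, in a division-free form. -/
lemma addition (L : PeriodPair) (w z : ℂ) (hw : w ∉ L.lattice) (hz : z ∉ L.lattice)
    (hzw : z + w ∉ L.lattice) :
    2 * (zeta L (z + w) - zeta L z - zeta L w) * (L.weierstrassP z - L.weierstrassP (z + w)) =
      L.derivWeierstrassP z + L.derivWeierstrassP (z + w) := by
  have h1 : HasDerivAt (fs L w) 0 z := by
    refine (hasDerivAt_const z (0 : ℂ)).congr_of_eventuallyEq ?_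
    filter_upwards [ev_notMem L w z hz hzw] with x hx using fs_eq_zero L w x hw hx.1 hx.2
  have a := (((zeta_hasDerivAt L (z + w) hzw).comp_add_const z w).sub
    (zeta_hasDerivAt L z hz)).sub_const (zeta L w)
  have h2 := (((a.pow 2).sub (wp_hasDerivAt L z hz)).sub_const (L.weierstrassP w)).sub
    ((wp_hasDerivAt L (z + w) hzw).comp_add_const z w)
  have h3 := h1.unique h2
  simp at h3
  linear_combination -h3

/-- Derivative of the addition formula. -/
lemma addition' (L : PeriodPair) (w z : ℂ) (hw : w ∉ L.lattice) (hz : z ∉ L.lattice)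
    (hzw : z + w ∉ L.lattice) :
    2 * (zeta L (z + w) - zeta L z - zeta L w) *
      (L.derivWeierstrassP z - L.derivWeierstrassP (z + w)) +
      2 * (L.weierstrassP z - L.weierstrassP (z + w)) ^ 2 =
      deriv L.derivWeierstrassP z + deriv L.derivWeierstrassP (z + w) := by
  have a := (((zeta_hasDerivAt L (z + w) hzw).comp_add_const z w).sub
    (zeta_hasDerivAt L z hz)).sub_const (zeta L w)
  have h1 := (a.const_mul 2).mul ((wp_hasDerivAt L z hz).sub
    ((wp_hasDerivAt L (z + w) hzw).comp_add_const z w))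
  have h2 := (wp'_hasDerivAt L z hz).add ((wp'_hasDerivAt L (z + w) hzw).comp_add_const z w)
  have h3 := h1.unique (h2.congr_of_eventuallyEq (by
    filter_upwards [ev_notMem L w z hz hzw] with x hx
    exact (addition L w x hw hx.1 hx.2)))
  simp at h3
  linear_combination h3

/-- The second derivative of the Weierstrass function is six times its square. -/
lemma wp'' (L : PeriodPair)
    (hODE : ∀ z, z ∉ L.lattice → L.derivWeierstrassP z ^ 2 = 4 * L.weierstrassP z ^ 3 - 1)
    (z : ℂ) (hz : z ∉ L.lattice) :
    deriv L.derivWeierstrassP z = 6 * L.weierstrassP z ^ 2 := by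
  have o := L.isClosed_lattice.isOpen_compl
  have hmul : ∀ x, x ∉ L.lattice →
      L.derivWeierstrassP x * (deriv L.derivWeierstrassP x - 6 * L.weierstrassP x ^ 2) = 0 := by
    intro x hx
    have h1 := (wp'_hasDerivAt L x hx).pow 2
    have h2 := (((wp_hasDerivAt L x hx).pow 3).const_mul 4).sub_const 1
    have h3 := h1.unique (h2.congr_of_eventuallyEq (by
      filter_upwards [o.mem_nhds hx] with y hy using hODE y hy))
    simp at h3
    linear_combination h3 / 2
  by_contra hne
  have hne' : deriv L.derivWeierstrassP z - 6 * L.weierstrassP z ^ 2 ≠ 0 := sub_ne_zero.mpr hne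
  have hc : ContinuousAt (fun x ↦ deriv L.derivWeierstrassP x - 6 * L.weierstrassP x ^ 2) z := by
    have := (L.analyticOnNhd_derivWeierstrassP z hz).deriv.continuousAt
    have := (L.analyticOnNhd_weierstrassP z hz).continuousAt
    fun_prop
  have hz' : ∀ᶠ x in 𝓝 z, L.derivWeierstrassP x = 0 := by
    filter_upwards [hc.eventually_ne hne', o.mem_nhds hz] with x h1 h2
    exact (mul_eq_zero.mp (hmul x h2)).resolve_right h1
  have hall : Set.EqOn L.derivWeierstrassP 0 (L.lattice : Set ℂ)ᶜ :=
    L.analyticOnNhd_derivWeierstrassP.eqOn_zero_of_preconnected_of_eventuallyEq_zero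
      (isPreconnected_compl L) hz hz'
  obtain ⟨c, hcst⟩ := o.exists_is_const_of_deriv_eq_zero (isPreconnected_compl L)
    L.differentiableOn_weierstrassP (fun x hx ↦ by
      rw [L.deriv_weierstrassP]; exact hall hx)
  have hev : L.weierstrassP =ᶠ[𝓝[≠] 0] fun _ ↦ c := by
    filter_upwards [punct L z hz] with x hx using hcst x hx.1
  have ho := L.order_weierstrassP 0 (zero_mem _)
  rw [meromorphicOrderAt_congr hev] at ho
  have h0 := (analyticAt_const (𝕜 := ℂ) (v := c) (x := (0 : ℂ))).meromorphicOrderAt_nonneg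
  rw [ho] at h0
  revert h0
  decide

lemma s3sq : (Real.sqrt 3 : ℂ) ^ 2 = 3 := by
  rw [← Complex.ofReal_pow, Real.sq_sqrt (by norm_num)]; norm_num

lemma tau_re : tau.re = -1 / 2 := by simp [tau]

lemma tau_im : tau.im = Real.sqrt 3 / 2 := by simp [tau]

lemma tau_sq : tau ^ 2 = -1 - tau := by
  unfold tau
  linear_combination (1 / 4 : ℂ) * Complex.I ^ 2 * s3sq + (3 / 4 : ℂ) * Complex.I_sq

lemma conj_tau : conj tau = -1 - tau := by
  apply Complex.ext
  · simp [tau_re]; norm_num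
  · simp [tau_im]

/-- The hexagonal period pair. -/
def hex (ω : ℝ) (hω : 0 < ω) : PeriodPair where
  ω₁ := ω
  ω₂ := ω * tau
  indep := by
    rw [LinearIndependent.pair_iff]
    intro s t h
    have h1 := congrArg Complex.re h
    have h2 := congrArg Complex.im h
    have h3 : Real.sqrt 3 > 0 := by positivity
    simp [tau_re, tau_im, hω.ne'] at h1 h2
    subst h2
    simpa [hω.ne'] using h1

lemma mem_hex (ω : ℝ) (hω : 0 < ω) (z : ℂ) :
    z ∈ (hex ω hω).lattice ↔ ∃ m n : ℤ, z = ω * (m + n * tau) := by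
  rw [PeriodPair.mem_lattice]
  simp only [hex]
  refine exists_congr fun m ↦ exists_congr fun n ↦ ⟨fun h ↦ ?_, fun h ↦ ?_⟩
  · rw [← h]; ring
  · rw [h]; ring

lemma mem_Eis (z : ℂ) : z ∈ Eis ↔ ∃ m n : ℤ, z = m + n * tau := by
  constructor
  · intro h
    induction h using Subring.closure_induction with
    | mem x hx => exact ⟨0, 1, by simpa using hx⟩
    | zero => exact ⟨0, 0, by simp⟩
    | one => exact ⟨1, 0, by simp⟩
    | add x y _ _ hx hy =>
      obtain ⟨a, b, rfl⟩ := hx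
      obtain ⟨c, d, rfl⟩ := hy
      exact ⟨a + c, b + d, by push_cast; ring⟩
    | neg x _ hx =>
      obtain ⟨a, b, rfl⟩ := hx
      exact ⟨-a, -b, by push_cast; ring⟩
    | mul x y _ _ hx hy =>
      obtain ⟨a, b, rfl⟩ := hx
      obtain ⟨c, d, rfl⟩ := hy
      exact ⟨a * c - b * d, a * d + b * c - b * d, by
        push_cast; linear_combination (b * d : ℂ) * tau_sq⟩
  · rintro ⟨m, n, rfl⟩
    have ht : tau ∈ Eis := Subring.subset_closure rfl
    exact add_mem (intCast_mem _ _) (mul_mem (intCast_mem _ _) ht)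

lemma inLattice_iff (ω : ℝ) (hω : 0 < ω) (z : ℂ) :
    inLattice ω z ↔ z ∈ (hex ω hω).lattice := by
  rw [mem_hex]
  constructor
  · rintro ⟨a, rfl⟩
    obtain ⟨m, n, h⟩ := (mem_Eis a).mp a.2
    exact ⟨m, n, by rw [h]⟩
  · rintro ⟨m, n, rfl⟩
    exact ⟨⟨_, (mem_Eis _).mpr ⟨m, n, rfl⟩⟩, rfl⟩

/-- The nonzero lattice vectors as a subtype of the lattice. -/
lemma tsum_inLattice (ω : ℝ) (hω : 0 < ω) (f : ℂ → ℂ) :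
    ∑' a : {w : ℂ // inLattice ω w ∧ w ≠ 0}, f a =
      ∑' l : (hex ω hω).lattice, if l.1 = 0 then 0 else f l.1 := by
  let j : {w : ℂ // inLattice ω w ∧ w ≠ 0} → (hex ω hω).lattice :=
    fun a ↦ ⟨a.1, (inLattice_iff ω hω _).mp a.2.1⟩
  have hj : Function.Injective j := fun a b h ↦ Subtype.ext (congrArg (fun x ↦ x.1) h)
  have h := hj.tsum_eq (f := fun l : (hex ω hω).lattice ↦ if l.1 = 0 then 0 else f l.1) (by
    intro l hl
    have hl0 : l.1 ≠ 0 := by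
      intro h0
      rw [Function.mem_support, if_pos h0] at hl
      exact hl rfl
    exact ⟨⟨l.1, (inLattice_iff ω hω _).mpr l.2, hl0⟩, rfl⟩)
  rw [← h]
  congr with a
  simp [j, a.2.2]

lemma wzeta_eq (ω : ℝ) (hω : 0 < ω) (z : ℂ) : wzeta ω z = zeta (hex ω hω) z := by
  unfold wzeta zeta zReg
  rw [tsum_inLattice ω hω (fun a ↦ 1 / (z - a) + 1 / a + z / a ^ 2)]

lemma wp_eq (ω : ℝ) (hω : 0 < ω) : wp ω = (hex ω hω).weierstrassP := by
  ext z
  rw [wpExcept_zero, add_comm]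
  unfold wp PeriodPair.weierstrassPExcept
  rw [tsum_inLattice ω hω (fun a ↦ 1 / (z - a) ^ 2 - 1 / a ^ 2)]

lemma hex_conj (ω : ℝ) (hω : 0 < ω) (l : ℂ) :
    conj l ∈ (hex ω hω).lattice ↔ l ∈ (hex ω hω).lattice := by
  have key : ∀ l, l ∈ (hex ω hω).lattice → conj l ∈ (hex ω hω).lattice := by
    intro l hl
    rw [mem_hex] at hl ⊢
    obtain ⟨m, n, rfl⟩ := hl
    refine ⟨m - n, -n, ?_⟩
    simp only [map_mul, map_add, conj_tau, Complex.conj_ofReal, map_intCast]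
    push_cast
    ring
  exact ⟨fun h ↦ by simpa using key _ h, key l⟩

lemma eps_mul : (1 + tau) * (-tau) = 1 := by linear_combination -tau_sq

lemma eps_ne : 1 + tau ≠ 0 := left_ne_zero_of_mul_eq_one eps_mul

lemma eps_norm : ‖1 + tau‖ = 1 := by
  have h : ‖1 + tau‖ ^ 2 = 1 := by
    rw [← Complex.normSq_eq_norm_sq, Complex.normSq_apply]
    simp only [Complex.add_re, Complex.one_re, tau_re, Complex.add_im, Complex.one_im, tau_im]
    have := Real.sq_sqrt (show (0 : ℝ) ≤ 3 by norm_num)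
    nlinarith
  nlinarith [norm_nonneg (1 + tau)]

lemma hex_eps (ω : ℝ) (hω : 0 < ω) (l : ℂ) :
    (1 + tau) * l ∈ (hex ω hω).lattice ↔ l ∈ (hex ω hω).lattice := by
  simp only [mem_hex]
  constructor
  · rintro ⟨m, n, h⟩
    refine ⟨n, n - m, ?_⟩
    have : l = (-tau) * ((1 + tau) * l) := by linear_combination -l * eps_mul
    rw [this, h]
    push_cast
    linear_combination -(ω * n : ℂ) * tau_sq
  · rintro ⟨m, n, rfl⟩
    refine ⟨m - n, m, ?_⟩
    push_cast
    linear_combination (ω * n : ℂ) * tau_sq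

lemma hex_norm (ω : ℝ) (hω : 0 < ω) (l : ℂ) (hl : l ∈ (hex ω hω).lattice) (hn : ‖l‖ < ω) :
    l = 0 := by
  rw [mem_hex] at hl
  obtain ⟨m, n, rfl⟩ := hl
  rw [norm_mul, Complex.norm_of_nonneg hω.le] at hn
  have h1 : ‖(m + n * tau : ℂ)‖ < 1 := by
    by_contra h
    push Not at h
    nlinarith
  have h2 : ‖(m + n * tau : ℂ)‖ ^ 2 = ((m ^ 2 - m * n + n ^ 2 : ℤ) : ℝ) := by
    rw [← Complex.normSq_eq_norm_sq, Complex.normSq_apply]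
    simp [tau_re, tau_im]
    have := Real.sq_sqrt (show (0 : ℝ) ≤ 3 by norm_num)
    linear_combination (n ^ 2 / 4 : ℝ) * this
  have h3 : ((m ^ 2 - m * n + n ^ 2 : ℤ) : ℝ) < 1 := by
    rw [← h2]
    nlinarith [norm_nonneg (m + n * tau : ℂ)]
  have h4 : m ^ 2 - m * n + n ^ 2 < 1 := by exact_mod_cast h3
  have h5 : n = 0 := by
    by_contra hn0
    have : 0 < n ^ 2 := by positivity
    nlinarith [sq_nonneg (2 * m - n)]
  subst h5
  have h6 : m = 0 := by
    by_contra hn0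
    have : 0 < m ^ 2 := by positivity
    nlinarith
  subst h6
  simp

lemma notMem (ω : ℝ) (hω : 0 < ω) (l : ℂ) (h0 : l ≠ 0) (hn : ‖l‖ < ω) :
    l ∉ (hex ω hω).lattice := fun h ↦ h0 (hex_norm ω hω l h hn)

lemma legendre (ω : ℝ) (hω : 0 < ω) (η : ℂ)
    (hη : ∀ z, z ∉ (hex ω hω).lattice → zeta (hex ω hω) (z + ω) = zeta (hex ω hω) z + η) :
    η = 2 * Real.pi / (Real.sqrt 3 * ω) := by
  set L := hex ω hω with hL
  have hball : ∀ z ∈ Metric.ball (0 : ℂ) ω, z ∈ ((L.lattice : Set ℂ) \ {0})ᶜ := by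
    intro z hz h
    exact h.2 (hex_norm ω hω z h.1 (by simpa using hz))
  have hd : DifferentiableOn ℂ (zReg L) (Metric.ball 0 ω) := fun z hz ↦
    (zReg_hasDerivAt L z (hball z hz)).differentiableAt.differentiableWithinAt
  obtain ⟨G, hG⟩ := hd.isExactOn_ball
  -- `G` is invariant under rotation
  have hinv : ∀ z ∈ Metric.ball (0 : ℂ) ω, G ((1 + tau) * z) = G z := by
    have hm : ∀ z ∈ Metric.ball (0 : ℂ) ω, (1 + tau) * z ∈ Metric.ball (0 : ℂ) ω := by
      intro z hz
      simpa [eps_norm] using hz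
    have hD : ∀ z ∈ Metric.ball (0 : ℂ) ω,
        HasDerivAt (fun z ↦ G ((1 + tau) * z) - G z) 0 z := by
      intro z hz
      have h1 := HasDerivAt.comp z (hG _ (hm z hz)) ((hasDerivAt_id z).const_mul (1 + tau))
      refine (h1.sub (hG z hz)).congr_deriv ?_
      rw [zReg_smul L (1 + tau) eps_ne (hex_eps ω hω)]
      have := mul_inv_cancel₀ eps_ne
      linear_combination zReg L z * this
    obtain ⟨c, hc⟩ := Metric.isOpen_ball.exists_is_const_of_deriv_eq_zero
      (convex_ball (0 : ℂ) ω).isPreconnected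
      (fun z hz ↦ (hD z hz).differentiableAt.differentiableWithinAt)
      (fun z hz ↦ (hD z hz).deriv)
    have h0 := hc 0 (by simpa using hω)
    simp at h0
    intro z hz
    have := hc z hz
    rw [← h0] at this
    exact sub_eq_zero.mp this
  have hu : ∀ s ∈ Metric.ball (0 : ℂ) (ω / 2), ‖(ω / 2 + Complex.I * s : ℂ)‖ < ω ∧
      0 < (ω / 2 + Complex.I * s : ℂ).re := by
    intro s hs
    have hs' : ‖s‖ < ω / 2 := by simpa using hs
    constructor
    · refine (norm_add_le _ _).trans_lt ?_
      have : ‖(ω / 2 : ℂ)‖ = ω / 2 := by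
        rw [norm_div, Complex.norm_of_nonneg hω.le]; simp
      rw [this, norm_mul, Complex.norm_I]
      linarith
    · have h1 := Complex.abs_im_le_norm s
      have h2 := le_abs_self s.im
      have h3 : (ω / 2 + Complex.I * s : ℂ).re = ω / 2 - s.im := by
        have : (ω / 2 : ℂ) = ((ω / 2 : ℝ) : ℂ) := by push_cast; ring
        rw [this]
        simp
        ring
      rw [h3]
      linarith
  have hF : ∀ s ∈ Metric.ball (0 : ℂ) (ω / 2), HasDerivAt
      (fun s : ℂ ↦ G (ω / 2 + Complex.I * s) + Complex.log (ω / 2 + Complex.I * s))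
      (Complex.I * zeta L (ω / 2 + Complex.I * s)) s := by
    intro s hs
    obtain ⟨h1, h2⟩ := hu s hs
    have hi : HasDerivAt (fun s : ℂ ↦ (ω / 2 + Complex.I * s : ℂ)) (Complex.I * 1) s :=
      ((hasDerivAt_id s).const_mul Complex.I).const_add _
    have hg := HasDerivAt.comp s (hG (ω / 2 + Complex.I * s) (by simpa using h1)) hi
    have hl := hi.clog (Or.inl h2)
    refine (hg.add hl).congr_deriv ?_
    unfold zeta
    ring
  have hP : ∀ s ∈ Metric.ball (0 : ℂ) (ω / 2), HasDerivAt
      (fun s : ℂ ↦ (G (ω / 2 + Complex.I * s) + Complex.log (ω / 2 + Complex.I * s)) -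
        (G (ω / 2 + Complex.I * (-s)) + Complex.log (ω / 2 + Complex.I * (-s)))
        - Complex.I * η * s) 0 s := by
    intro s hs
    have hs2 : -s ∈ Metric.ball (0 : ℂ) (ω / 2) := by simpa using hs
    have h1 := hF s hs
    have h2 := HasDerivAt.comp s (hF (-s) hs2) (hasDerivAt_neg s)
    have h3 := (hasDerivAt_id s).const_mul (Complex.I * η)
    refine ((h1.sub h2).sub h3).congr_deriv ?_
    obtain ⟨a1, a2⟩ := hu (-s) hs2
    have hv : (ω / 2 + Complex.I * (-s) : ℂ) ∉ L.lattice :=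
      notMem ω hω _ (fun h ↦ by rw [h] at a2; simp at a2) a1
    have h5 := hη (-(ω / 2 + Complex.I * (-s))) (fun h ↦ hv (neg_mem_iff.mp h))
    rw [zeta_neg, show -(ω / 2 + Complex.I * (-s) : ℂ) + ω = ω / 2 + Complex.I * s by ring] at h5
    rw [h5]
    ring
  obtain ⟨c, hc⟩ := Metric.isOpen_ball.exists_is_const_of_deriv_eq_zero
    (convex_ball (0 : ℂ) (ω / 2)).isPreconnected
    (fun z hz ↦ (hP z hz).differentiableAt.differentiableWithinAt)
    (fun z hz ↦ (hP z hz).deriv)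
  have hc0 := hc 0 (by simpa using hω)
  simp at hc0
  subst hc0
  have s3 : (0 : ℝ) < Real.sqrt 3 := by positivity
  have s3' : (Real.sqrt 3 : ℂ) ≠ 0 := by exact_mod_cast s3.ne'
  have s3q := s3sq
  have hω' : (ω : ℂ) ≠ 0 := by exact_mod_cast hω.ne'
  have hY : ((ω / (2 * Real.sqrt 3) : ℝ) : ℂ) ∈ Metric.ball (0 : ℂ) (ω / 2) := by
    have : (1 : ℝ) < Real.sqrt 3 := by
      rw [Real.lt_sqrt] <;> norm_num
    rw [mem_ball_zero_iff, Complex.norm_of_nonneg (by positivity)]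
    rw [div_lt_div_iff_of_pos_left hω (by positivity) (by norm_num)]
    linarith
  have hY' := hc _ hY
  have hYn : -((ω / (2 * Real.sqrt 3) : ℝ) : ℂ) ∈ Metric.ball (0 : ℂ) (ω / 2) := by
    rw [mem_ball_zero_iff, norm_neg]
    exact mem_ball_zero_iff.mp hY
  have hrot : (1 + tau) * (ω / 2 + Complex.I * (-((ω / (2 * Real.sqrt 3) : ℝ) : ℂ))) =
      ω / 2 + Complex.I * ((ω / (2 * Real.sqrt 3) : ℝ) : ℂ) := by
    unfold tau
    push_cast
    field_simp
    linear_combination Complex.I * s3q - (Real.sqrt 3 : ℂ) * Complex.I_sq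
  have hGG := hinv (ω / 2 + Complex.I * (-((ω / (2 * Real.sqrt 3) : ℝ) : ℂ)))
    (by rw [mem_ball_zero_iff]; exact (hu _ hYn).1)
  rw [hrot] at hGG
  have hlog : ∀ t : ℝ, |t| = Real.pi / 6 → Complex.log ((ω / Real.sqrt 3 : ℝ) *
      Complex.exp (t * Complex.I)) = Real.log (ω / Real.sqrt 3) + t * Complex.I := by
    intro t ht
    have hr : 0 < ω / Real.sqrt 3 := by positivity
    have hpi := Real.pi_pos
    have habs := abs_le.mp ht.le
    have him : (t * Complex.I).im = t := by simp
    rw [Complex.log_ofReal_mul hr (Complex.exp_ne_zero _), Complex.log_exp]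
    · rw [him]; linarith [habs.1]
    · rw [him]; linarith [habs.2]
  have hpos : (ω / 2 + Complex.I * ((ω / (2 * Real.sqrt 3) : ℝ) : ℂ)) =
      (ω / Real.sqrt 3 : ℝ) * Complex.exp ((Real.pi / 6 : ℝ) * Complex.I) := by
    rw [Complex.exp_mul_I, ← Complex.ofReal_cos, ← Complex.ofReal_sin, Real.cos_pi_div_six,
      Real.sin_pi_div_six]
    push_cast
    field_simp
  have hneg : (ω / 2 + Complex.I * (-((ω / (2 * Real.sqrt 3) : ℝ) : ℂ))) =
      (ω / Real.sqrt 3 : ℝ) * Complex.exp ((-(Real.pi / 6) : ℝ) * Complex.I) := by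
    rw [Complex.exp_mul_I, ← Complex.ofReal_cos, ← Complex.ofReal_sin, Real.cos_neg, Real.sin_neg,
      Real.cos_pi_div_six, Real.sin_pi_div_six]
    push_cast
    field_simp
  have hp6 : |Real.pi / 6| = Real.pi / 6 := abs_of_pos (by positivity)
  rw [← hGG, hpos, hneg, hlog _ hp6, hlog _ (by rw [abs_neg, hp6])] at hY'
  push_cast at hY'
  have hI : Complex.I * (Real.pi / 3 - η * (ω / (2 * Real.sqrt 3))) = 0 := by
    linear_combination hY'
  have h9 := (mul_eq_zero.mp hI).resolve_left Complex.I_ne_zero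
  field_simp at h9 ⊢
  apply mul_left_cancel₀ s3'
  linear_combination -h9 + (η * ω) * s3q

lemma final (ω : ℝ) (hω : 0 < ω)
    (hO : ∀ z, z ∉ (hex ω hω).lattice →
      (hex ω hω).derivWeierstrassP z ^ 2 = 4 * (hex ω hω).weierstrassP z ^ 3 - 1) :
    zeta (hex ω hω) ((ω : ℂ) / 6) =
      (Real.pi : ℂ) / (3 * (Real.sqrt 3 : ℂ) * (ω : ℂ)) - 1 / (Real.sqrt 3 : ℂ) -
        (Real.sqrt 3 : ℂ) / (cbrt2 - 2) := by
  have hωl : (ω : ℂ) ∈ (hex ω hω).lattice := (mem_hex ω hω _).mpr ⟨1, 0, by simp⟩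
  obtain ⟨η, hη⟩ := zeta_quasi (hex ω hω) ω hωl
  have hleg := legendre ω hω η hη
  have hn : ∀ x : ℝ, 0 < x → x < ω → (x : ℂ) ∉ (hex ω hω).lattice := fun x h1 h2 ↦
    notMem ω hω _ (by exact_mod_cast h1.ne') (by rwa [Complex.norm_of_nonneg h1.le])
  set L := hex ω hω with hL
  have hω' : (ω : ℂ) ≠ 0 := by exact_mod_cast hω.ne'
  have hc := hex_conj ω hω
  -- real values on the real axis
  have hp : ∀ x : ℝ, L.weierstrassP x = ((L.weierstrassP x).re : ℂ) := fun x ↦ by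
    have := wp_conj L hc x
    rw [Complex.conj_ofReal] at this
    exact (Complex.conj_eq_iff_re.mp this.symm).symm
  have hq : ∀ x : ℝ, L.derivWeierstrassP x = ((L.derivWeierstrassP x).re : ℂ) := fun x ↦ by
    have := wp'_conj L hc x
    rw [Complex.conj_ofReal] at this
    exact (Complex.conj_eq_iff_re.mp this.symm).symm
  generalize hpd : (fun x : ℝ ↦ (L.weierstrassP x).re) = p
  generalize hqd : (fun x : ℝ ↦ (L.derivWeierstrassP x).re) = q
  have hp : ∀ x : ℝ, L.weierstrassP x = (p x : ℂ) := fun x ↦ by rw [← hpd]; exact hp x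
  have hq : ∀ x : ℝ, L.derivWeierstrassP x = (q x : ℂ) := fun x ↦ by rw [← hqd]; exact hq x
  have hode : ∀ x : ℝ, 0 < x → x < ω → q x ^ 2 = 4 * p x ^ 3 - 1 := fun x h1 h2 ↦ by
    have := hO x (hn x h1 h2)
    rw [hp, hq] at this
    exact_mod_cast this
  have hppos : ∀ x : ℝ, 0 < x → x < ω → 0 < p x := fun x h1 h2 ↦ by
    have := hode x h1 h2
    by_contra h
    have h3 : p x ^ 3 ≤ 0 := by
      have := mul_nonneg (sq_nonneg (p x)) (neg_nonneg.mpr (not_lt.mp h))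
      nlinarith
    nlinarith [sq_nonneg (q x)]
  have hqder : ∀ x : ℝ, 0 < x → x < ω → HasDerivAt q (6 * p x ^ 2) x := fun x h1 h2 ↦ by
    have h := (wp'_hasDerivAt L x (hn x h1 h2)).real_of_complex
    rw [wp'' L hO _ (hn x h1 h2), hp, hqd] at h
    convert h using 1
    norm_cast
  have hwl : ∀ z, L.weierstrassP (z + ω) = L.weierstrassP z :=
    fun z ↦ L.weierstrassP_add_coe z ⟨ω, hωl⟩
  have hwl' : ∀ z, L.derivWeierstrassP (z + ω) = L.derivWeierstrassP z :=
    fun z ↦ L.derivWeierstrassP_add_coe z ⟨ω, hωl⟩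
  -- the points
  have n2 := hn (ω / 2) (by linarith) (by linarith)
  have n3 := hn (ω / 3) (by linarith) (by linarith)
  have n6 := hn (ω / 6) (by linarith) (by linarith)
  have n23 := hn (2 * ω / 3) (by linarith) (by linarith)
  have m2 := hO _ n2
  have e2 : -((ω / 2 : ℝ) : ℂ) + ω = ((ω / 2 : ℝ) : ℂ) := by push_cast; ring
  have e3 : -((ω / 3 : ℝ) : ℂ) + ω = ((2 * ω / 3 : ℝ) : ℂ) := by push_cast; ring
  have e33 : ((ω / 3 : ℝ) : ℂ) + ((ω / 3 : ℝ) : ℂ) = ((2 * ω / 3 : ℝ) : ℂ) := by push_cast; ring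
  have e26 : ((ω / 2 : ℝ) : ℂ) + -((ω / 6 : ℝ) : ℂ) = ((ω / 3 : ℝ) : ℂ) := by push_cast; ring
  have hZ2 := hη (-((ω / 2 : ℝ) : ℂ)) (fun h ↦ n2 (neg_mem_iff.mp h))
  have hZ3 := hη (-((ω / 3 : ℝ) : ℂ)) (fun h ↦ n3 (neg_mem_iff.mp h))
  rw [e2, zeta_neg] at hZ2
  rw [e3, zeta_neg] at hZ3
  have hP2 := hwl (-((ω / 3 : ℝ) : ℂ))
  have hQ2 := hwl' (-((ω / 3 : ℝ) : ℂ))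
  have hq2 := hwl' (-((ω / 2 : ℝ) : ℂ))
  rw [e3, L.weierstrassP_neg, hp, hp] at hP2
  rw [e3, L.derivWeierstrassP_neg, hq, hq] at hQ2
  rw [e2, L.derivWeierstrassP_neg, hq] at hq2
  have hP2 : p (2 * ω / 3) = p (ω / 3) := by exact_mod_cast hP2
  have hQ2 : q (2 * ω / 3) = -q (ω / 3) := by exact_mod_cast hQ2
  have hq2 : q (ω / 2) = -q (ω / 2) := by exact_mod_cast hq2
  have hq2 : q (ω / 2) = 0 := by linarith
  have f1 := fs_eq_zero L _ _ n3 n3 (e33 ▸ n23)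
  have f2 := addition' L _ _ n3 n3 (e33 ▸ n23)
  have f3 := addition L (-((ω / 6 : ℝ) : ℂ)) ((ω / 2 : ℝ) : ℂ)
    (fun h ↦ n6 (neg_mem_iff.mp h)) n2 (e26 ▸ n3)
  unfold fs at f1
  rw [e33, hp, hp, hP2, hZ3] at f1
  rw [e33, wp'' L hO _ n3, wp'' L hO _ n23, hp, hp, hq, hq, hP2, hQ2, hZ3, Complex.ofReal_neg] at f2
  rw [e26, zeta_neg, hp, hp, hq, hq, hq2] at f3
  have o3 := hode (ω / 3) (by linarith) (by linarith)
  have o2 := hode (ω / 2) (by linarith) (by linarith)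
  have pp := hppos (ω / 3) (by linarith) (by linarith)
  rw [hq2] at o2
  have hQneg : q (ω / 3) < 0 := by
    have hmono : StrictMonoOn q (Set.Icc (ω / 3) (ω / 2)) := by
      apply strictMonoOn_of_deriv_pos (convex_Icc _ _)
      · intro x hx
        exact (hqder x (by linarith [hx.1]) (by linarith [hx.2])).continuousAt.continuousWithinAt
      · intro x hx
        rw [interior_Icc] at hx
        have h1 : 0 < x := by linarith [hx.1]
        have h2 : x < ω := by linarith [hx.2]
        rw [(hqder x h1 h2).deriv]
        have := hppos x h1 h2
        positivity
    have := hmono (Set.left_mem_Icc.mpr (by linarith)) (Set.right_mem_Icc.mpr (by linarith))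
      (by linarith : ω / 3 < ω / 2)
    rwa [hq2] at this
  set P := p (ω / 3)
  set Q := q (ω / 3)
  set E := p (ω / 2)
  have o3' : (Q : ℂ) ^ 2 = 4 * P ^ 3 - 1 := by exact_mod_cast o3
  generalize zeta L ((ω / 2 : ℝ) : ℂ) = Z2 at *
  generalize zeta L ((ω / 3 : ℝ) : ℂ) = Z3 at *
  have g1 : (η - 3 * Z3) ^ 2 = 3 * P := by linear_combination f1
  have g2 : (η - 3 * Z3) * Q = 3 * P ^ 2 := by linear_combination f2 / 4
  have g3 : (3 * P ^ 2) ^ 2 = 3 * P * (4 * P ^ 3 - 1) := by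
    have : ((3 * P ^ 2) ^ 2 : ℂ) = 3 * P * (4 * P ^ 3 - 1) := by
      rw [← g2, ← o3', ← g1]; ring
    exact_mod_cast this
  have g4 : P * (P ^ 2 + P + 1) * (P - 1) = 0 := by linear_combination -g3 / 3
  have hP : P = 1 := by
    have : P * (P ^ 2 + P + 1) ≠ 0 := by positivity
    exact sub_eq_zero.mp ((mul_eq_zero.mp g4).resolve_left this)
  have hQ : Q = -Real.sqrt 3 := by
    have h1 : Q ^ 2 = 3 := by rw [o3, hP]; norm_num
    have : Real.sqrt 3 = -Q := by
      rw [← h1, ← neg_sq, Real.sqrt_sq (by linarith)]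
    linarith
  have hE : E = (2 : ℝ) ^ ((1 : ℝ) / 3) / 2 := by
    have h1 : ((2 : ℝ) ^ ((1 : ℝ) / 3)) ^ 3 = 2 := by
      rw [← Real.rpow_natCast, ← Real.rpow_mul (by norm_num)]; norm_num
    have : E ^ 3 = ((2 : ℝ) ^ ((1 : ℝ) / 3) / 2) ^ 3 := by
      rw [div_pow, h1]; linarith
    exact (Odd.strictMono_pow (by decide : Odd 3)).injective this
  have hlt : (2 : ℝ) ^ ((1 : ℝ) / 3) < 2 := by
    have := Real.rpow_lt_rpow_of_exponent_lt (by norm_num : (1 : ℝ) < 2)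
      (by norm_num : (1 : ℝ) / 3 < 1)
    simpa using this
  have hcE : (E : ℂ) = cbrt2 / 2 := by rw [hE]; unfold cbrt2; push_cast; rfl
  have hc2 : cbrt2 - 2 ≠ 0 := by
    intro h
    have h3 : cbrt2 = ((2 : ℝ) : ℂ) := by push_cast; exact sub_eq_zero.mp h
    unfold cbrt2 at h3
    exact hlt.ne (Complex.ofReal_injective h3)
  have s3 : (0 : ℝ) < Real.sqrt 3 := by positivity
  have s3' : (Real.sqrt 3 : ℂ) ≠ 0 := by exact_mod_cast s3.ne'
  have s3q := s3sq
  have e6 : ((ω / 6 : ℝ) : ℂ) = ω / 6 := by push_cast; ring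
  rw [hcE, hP, hQ, e6] at f3
  rw [hP, hQ] at g2
  push_cast at f3 g2
  generalize zeta L ((ω : ℂ) / 6) = Z6 at *
  generalize cbrt2 = c at *
  generalize (Real.sqrt 3 : ℂ) = s at *
  have hZ3' : Z3 = (η + s) / 3 := by
    apply mul_left_cancel₀ s3'
    linear_combination (g2 - s3q) / 3
  have hZ2' : Z2 = η / 2 := by linear_combination hZ2 / 2
  have hs : 1 / s = s / 3 := by field_simp; linear_combination -s3q
  have hh : (Z3 - Z2 + Z6) = -s / (c - 2) := by
    rw [eq_div_iff hc2]; linear_combination f3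
  have hηp : (Real.pi : ℂ) / (3 * s * ω) = η / 6 := by rw [hleg]; field_simp; norm_num
  rw [hηp, hs]
  linear_combination hh - hZ3' + hZ2'

end WZ

/-- From [Qiu], (2.9): `ζ(ω/6) = π/(3√3·ω) − 1/√3 − √3/(∛2 − 2)`.
Here `ω > 0` is pinned down by the differential equation `℘′² = 4℘³ − 1` for the
lattice `L_ω = ω·ℤ[τ]` (equivalently, the lattice invariants are `g₂ = 0`, `g₃ = 1`). -/
theorem wzeta_value_at_one_sixth
    (ω : ℝ) (hω : 0 < ω)
    (hODE : ∀ z : ℂ, ¬ inLattice ω z → deriv (wp ω) z ^ 2 = 4 * wp ω z ^ 3 - 1) :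
    wzeta ω ((ω : ℂ) / 6) =
      (Real.pi : ℂ) / (3 * (Real.sqrt 3 : ℂ) * (ω : ℂ)) - 1 / (Real.sqrt 3 : ℂ) -
        (Real.sqrt 3 : ℂ) / (cbrt2 - 2) := by
  rw [WZ.wzeta_eq ω hω]
  refine WZ.final ω hω fun z hz ↦ ?_
  have h := hODE z fun h ↦ hz ((WZ.inLattice_iff ω hω z).mp h)
  rwa [WZ.wp_eq ω hω, PeriodPair.deriv_weierstrassP] at h
end
end

section
/- For the Weierstrass zeta function of the lattice L_ω = ω·ℤ[τ] with invariants g₂ = 0, g₃ = 1, the quasi-period satisfies: for every α ∈ L_ω and every z ∉ L_ω, ζ(z + α, L_ω) − ζ(z, L_ω) = 2π·ᾱ/(√3·ω²), where ᾱ is the complex conjugate of α. -/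
noncomputable section

open Complex Real ComplexConjugate

open Filter Topology EisensteinSeries

lemma sqrt3_sq : ((Real.sqrt 3 : ℝ) : ℂ) ^ 2 = 3 := by
  rw [← Complex.ofReal_pow, Real.sq_sqrt (by norm_num)]; norm_num

lemma tau_sq : tau ^ 2 = -1 - tau := by
  have h := sqrt3_sq
  unfold tau
  linear_combination (Complex.I ^ 2 / 4) * h + (3 / 4 : ℂ) * Complex.I_sq

lemma tau_im : tau.im = Real.sqrt 3 / 2 := by
  simp [tau]

lemma tau_im_pos : 0 < tau.im := by
  rw [tau_im]; positivity

lemma tau_ne_zero : tau ≠ 0 := by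
  intro h
  have := tau_im_pos
  simp [h] at this

lemma tau_inv : tau⁻¹ = -1 - tau := by
  rw [← tau_sq, inv_eq_iff_eq_inv]
  refine eq_inv_of_mul_eq_one_left ?_
  linear_combination (tau - 1) * tau_sq

lemma tau_conj : (starRingEnd ℂ) tau = -1 - tau := by
  apply Complex.ext
  · rw [Complex.conj_re]
    simp [tau]; ring
  · rw [Complex.conj_im]
    simp [tau]

/-- `τ` as a point of the upper half plane. -/
def tauH : UpperHalfPlane := ⟨tau, tau_im_pos⟩

lemma coe_tauH : (tauH : ℂ) = tau := rfl

lemma G2_tau : G2 tauH = 2 * (Real.pi : ℂ) / (Real.sqrt 3 : ℂ) := by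
  have hS := G2_S_transform tauH
  have hST : ModularGroup.S • tauH = ModularGroup.T • tauH := by
    rw [UpperHalfPlane.ext_iff, UpperHalfPlane.modular_S_smul, UpperHalfPlane.modular_T_smul,
      UpperHalfPlane.coe_mk, UpperHalfPlane.coe_vadd, coe_tauH, inv_neg, tau_inv]
    push_cast; ring
  have hT : G2 (ModularGroup.T • tauH) = G2 tauH := by
    have := congrFun G2_T_transform tauH
    rw [ModularForm.SL_slash_apply] at this
    have hd : UpperHalfPlane.denom ModularGroup.T tauH = 1 := by
      rw [ModularGroup.denom_apply]
      simp [ModularGroup.T]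
    rw [hd] at this
    simpa using this
  rw [hST, hT, coe_tauH, ← inv_pow, div_eq_mul_inv, tau_inv] at hS
  have h3 : (Real.sqrt 3 : ℂ) ≠ 0 := by
    intro h; have := sqrt3_sq; rw [h] at this; norm_num at this
  have e1 : (1 - tau) * G2 tauH = 2 * Real.pi * Complex.I * (-1 - tau) := by
    linear_combination hS + G2 tauH * tau_sq
  have hne : 1 - tau ≠ 0 := by
    intro h
    have := tau_im_pos
    rw [← sub_eq_zero.mp h] at this
    simp at this
  apply mul_left_cancel₀ hne
  rw [e1]
  field_simp
  unfold tau
  linear_combination (-(Complex.I ^ 2) / 2) * sqrt3_sq - (3 / 2 : ℂ) * Complex.I_sq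

lemma mem_Eis_iff (x : ℂ) : x ∈ Eis ↔ ∃ m n : ℤ, x = m * tau + n := by
  constructor
  · intro hx
    induction hx using Subring.closure_induction with
    | mem x hx => exact ⟨1, 0, by simpa using hx⟩
    | zero => exact ⟨0, 0, by simp⟩
    | one => exact ⟨0, 1, by simp⟩
    | add x y _ _ hx hy =>
      obtain ⟨a, b, rfl⟩ := hx
      obtain ⟨c, d, rfl⟩ := hy
      exact ⟨a + c, b + d, by push_cast; ring⟩
    | neg x _ hx =>
      obtain ⟨a, b, rfl⟩ := hx
      exact ⟨-a, -b, by push_cast; ring⟩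
    | mul x y _ _ hx hy =>
      obtain ⟨a, b, rfl⟩ := hx
      obtain ⟨c, d, rfl⟩ := hy
      exact ⟨a * d + b * c - a * c, b * d - a * c, by
        push_cast; linear_combination (a * c : ℂ) * tau_sq⟩
  · rintro ⟨m, n, rfl⟩
    exact add_mem (mul_mem (intCast_mem _ _) (Subring.subset_closure rfl)) (intCast_mem _ _)

/-- Parametrization of the lattice. -/
def latPt (ω : ℝ) (p : ℤ × ℤ) : ℂ := ω * (p.1 * tau + p.2)

lemma inLattice_iff (ω : ℝ) (z : ℂ) : inLattice ω z ↔ ∃ p, z = latPt ω p := by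
  constructor
  · rintro ⟨⟨a, ha⟩, rfl⟩
    obtain ⟨m, n, rfl⟩ := (mem_Eis_iff a).1 ha
    exact ⟨(m, n), rfl⟩
  · rintro ⟨⟨m, n⟩, rfl⟩
    exact ⟨⟨_, (mem_Eis_iff _).2 ⟨m, n, rfl⟩⟩, rfl⟩

lemma latPt_add (ω : ℝ) (p q : ℤ × ℤ) : latPt ω (p + q) = latPt ω p + latPt ω q := by
  simp [latPt]; ring

lemma latPt_neg (ω : ℝ) (p : ℤ × ℤ) : latPt ω (-p) = - latPt ω p := by
  simp [latPt]; ring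

lemma inLattice_add {ω : ℝ} {x y : ℂ} (hx : inLattice ω x) (hy : inLattice ω y) :
    inLattice ω (x + y) := by
  rw [inLattice_iff] at *
  obtain ⟨p, rfl⟩ := hx
  obtain ⟨q, rfl⟩ := hy
  exact ⟨p + q, (latPt_add _ _ _).symm⟩

lemma inLattice_neg {ω : ℝ} {x : ℂ} (hx : inLattice ω x) : inLattice ω (-x) := by
  rw [inLattice_iff] at *
  obtain ⟨p, rfl⟩ := hx
  exact ⟨-p, (latPt_neg _ _).symm⟩

lemma tau_mem_Eis : tau ∈ Eis := Subring.subset_closure rfl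

lemma tau_inv_mem_Eis : tau⁻¹ ∈ Eis := by
  rw [tau_inv]
  exact sub_mem (neg_mem (one_mem _)) tau_mem_Eis

lemma inLattice_mul {ω : ℝ} {x c : ℂ} (hc : c ∈ Eis) (hx : inLattice ω x) :
    inLattice ω (c * x) := by
  obtain ⟨a, rfl⟩ := hx
  exact ⟨⟨c, hc⟩ * a, by simp; ring⟩

lemma wzeta_tau_mul (ω : ℝ) (z : ℂ) : wzeta ω (tau * z) = tau⁻¹ * wzeta ω z := by
  have h0 := tau_ne_zero
  let e : {w : ℂ // inLattice ω w ∧ w ≠ 0} ≃ {w : ℂ // inLattice ω w ∧ w ≠ 0} :=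
    { toFun := fun a => ⟨tau * a, inLattice_mul tau_mem_Eis a.2.1, mul_ne_zero h0 a.2.2⟩
      invFun := fun a => ⟨tau⁻¹ * a, inLattice_mul tau_inv_mem_Eis a.2.1,
        mul_ne_zero (inv_ne_zero h0) a.2.2⟩
      left_inv := fun a => Subtype.ext (by simp [h0])
      right_inv := fun a => Subtype.ext (by simp [h0]) }
  unfold wzeta
  rw [← e.tsum_eq, mul_add, ← tsum_mul_left]
  congr 1
  · rw [one_div, mul_inv, one_div]
  · refine tsum_congr fun a => ?_
    have ha := a.2.2
    simp only [e, Equiv.coe_fn_mk]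
    rw [← mul_sub]
    field_simp

/-- The period pair `(ωτ, ω)`. -/
def eisPair (ω : ℝ) (hω : 0 < ω) : PeriodPair where
  ω₁ := ω * tau
  ω₂ := ω
  indep := by
    rw [LinearIndependent.pair_iff]
    intro s t h
    have him := congrArg Complex.im h
    have hre := congrArg Complex.re h
    have := tau_im_pos.ne'
    simp [hω.ne', this] at him
    subst him
    simp [hω.ne'] at hre
    exact ⟨rfl, hre⟩

lemma eisPair_equiv (ω : ℝ) (hω : 0 < ω) (p : ℤ × ℤ) :
    (((eisPair ω hω).latticeEquivProd.symm p : (eisPair ω hω).lattice) : ℂ) = latPt ω p := by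
  rw [PeriodPair.latticeEquiv_symm_apply]
  simp [eisPair, latPt]; ring

lemma latPt_injective (ω : ℝ) (hω : 0 < ω) : Function.Injective (latPt ω) := by
  intro p q h
  rw [← eisPair_equiv ω hω, ← eisPair_equiv ω hω] at h
  exact (eisPair ω hω).latticeEquivProd.symm.injective (Subtype.ext h)

lemma summable_latPt_sub (ω : ℝ) (hω : 0 < ω) (x : ℂ) :
    Summable fun p : ℤ × ℤ => (‖latPt ω p - x‖ ^ 3)⁻¹ := by
  have h := ZLattice.summable_norm_sub_inv_pow (eisPair ω hω).lattice 3 (by simp) x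
  rw [← (eisPair ω hω).latticeEquivProd.symm.toEquiv.summable_iff] at h
  refine h.congr fun p => ?_
  simp [← eisPair_equiv ω hω]

/-- The summand of `ζ`. -/
def zTerm (z a : ℂ) : ℂ := 1 / (z - a) + 1 / a + z / a ^ 2

lemma amgm {x y : ℝ} (hx : 0 ≤ x) (hy : 0 ≤ y) : x ^ 2 * y ≤ x ^ 3 + y ^ 3 := by
  rcases le_total x y with h | h
  · nlinarith [pow_nonneg hx 3, mul_le_mul_of_nonneg_right (pow_le_pow_left₀ hx h 2) hy]
  · nlinarith [pow_nonneg hy 3, mul_le_mul_of_nonneg_left h (sq_nonneg x)]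

lemma latPt_zero (ω : ℝ) : latPt ω 0 = 0 := by simp [latPt]

lemma summable_zTerm (ω : ℝ) (hω : 0 < ω) (z : ℂ) (hz : ¬ inLattice ω z) :
    Summable fun p : ℤ × ℤ => zTerm z (latPt ω p) := by
  have hG : Summable fun p : ℤ × ℤ => z ^ 2 / (latPt ω p ^ 2 * (z - latPt ω p)) := by
    refine Summable.of_norm_bounded (((summable_latPt_sub ω hω 0).add
      (summable_latPt_sub ω hω z)).mul_left (‖z‖ ^ 2)) fun p => ?_
    have := amgm (inv_nonneg.2 (norm_nonneg (latPt ω p)))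
      (inv_nonneg.2 (norm_nonneg (latPt ω p - z)))
    rw [norm_div, norm_mul, norm_pow, norm_pow, norm_sub_rev z, div_eq_mul_inv, mul_inv, sub_zero]
    simp only [inv_pow] at this
    gcongr
  refine hG.congr_cofinite ?_
  filter_upwards [eventually_cofinite_ne (0 : ℤ × ℤ)] with p hp
  have h1 : latPt ω p ≠ 0 := fun h => hp (latPt_injective ω hω (h.trans (latPt_zero ω).symm))
  have h2 : z - latPt ω p ≠ 0 := fun h => hz ((inLattice_iff _ _).2 ⟨p, sub_eq_zero.1 h⟩)
  unfold zTerm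
  field_simp
  ring

lemma wzeta_eq (ω : ℝ) (hω : 0 < ω) (z : ℂ) (hz : ¬ inLattice ω z) :
    wzeta ω z = ∑' p : ℤ × ℤ, zTerm z (latPt ω p) := by
  have hs := summable_zTerm ω hω z hz
  rw [← hs.sum_add_tsum_subtype_compl {0}]
  simp only [Finset.sum_singleton, latPt_zero]
  unfold wzeta
  congr 1
  · simp [zTerm]
  · let f : {p : ℤ × ℤ // p ∉ ({0} : Finset (ℤ × ℤ))} → {w : ℂ // inLattice ω w ∧ w ≠ 0} :=
      fun p => ⟨latPt ω p, (inLattice_iff _ _).2 ⟨p, rfl⟩, fun h => p.2 (by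
        simpa using latPt_injective ω hω (h.trans (latPt_zero ω).symm))⟩
    have hf : Function.Bijective f := by
      constructor
      · intro p q h
        exact Subtype.ext (latPt_injective ω hω (congrArg Subtype.val h))
      · rintro ⟨w, hw, hw0⟩
        obtain ⟨p, rfl⟩ := (inLattice_iff _ _).1 hw
        refine ⟨⟨p, ?_⟩, rfl⟩
        rw [Finset.mem_singleton]
        rintro rfl
        exact hw0 (latPt_zero ω)
    rw [← (Equiv.ofBijective f hf).tsum_eq]
    rfl

lemma tendsto_aux (c : ℂ) (ω : ℝ) (hω : 0 < ω) :
    Tendsto (fun N : ℤ => 1 / (c - ω * (N : ℂ))) cofinite (𝓝 0) := by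
  simp only [one_div]
  apply tendsto_inv₀_cobounded.comp
  rw [← tendsto_norm_atTop_iff_cobounded]
  have h1 : Tendsto (fun N : ℤ => ω * ‖(N : ℝ)‖ - ‖c‖) cofinite atTop := by
    apply tendsto_atTop_add_const_right
    apply Tendsto.const_mul_atTop hω
    exact tendsto_norm_comp_cofinite_atTop_of_isClosedEmbedding Int.isClosedEmbedding_coe_real
  refine tendsto_atTop_mono (fun N => ?_) h1
  have := norm_sub_norm_le ((ω : ℂ) * N) c
  rw [norm_sub_rev] at this
  simpa [abs_of_pos hω] using this

lemma telescoping (h : ℤ → ℂ) (h0 : Tendsto h cofinite (𝓝 0))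
    (hs : Summable fun n : ℤ => h (n - 1) - h n) : ∑' n : ℤ, (h (n - 1) - h n) = 0 := by
  have hs' := hs
  rw [← (Equiv.addRight (1 : ℤ)).tsum_eq]
  rw [← (Equiv.addRight (1 : ℤ)).summable_iff] at hs'
  simp only [Function.comp_def, Equiv.coe_addRight, add_sub_cancel_right] at hs' ⊢
  rw [← tsum_eq_of_summable_unconditional (L := SummationFilter.symmetricIco ℤ) hs']
  apply HasSum.tsum_eq
  rw [SummationFilter.hasSum_symmetricIco_int_iff]
  simp only [Finset.sum_Ico_int_sub]
  rw [← sub_zero (0 : ℂ)]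
  rw [Int.cofinite_eq, tendsto_sup] at h0
  refine Tendsto.sub (h0.1.comp ?_) (h0.2.comp tendsto_natCast_atTop_atTop)
  exact tendsto_neg_atTop_atBot.comp tendsto_natCast_atTop_atTop

lemma inLattice_omega (ω : ℝ) : inLattice ω ω := ⟨1, by simp⟩

lemma not_inLattice_add {ω : ℝ} {z α : ℂ} (hα : inLattice ω α) (hz : ¬ inLattice ω z) :
    ¬ inLattice ω (z + α) := fun h => hz (by
  simpa using inLattice_add h (inLattice_neg hα))

lemma wzeta_add_omega (ω : ℝ) (hω : 0 < ω) (z : ℂ) (hz : ¬ inLattice ω z) :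
    wzeta ω (z + ω) - wzeta ω z = G2 tauH / ω := by
  have hω0 : (ω : ℂ) ≠ 0 := by exact_mod_cast hω.ne'
  have hz' := not_inLattice_add (inLattice_omega ω) hz
  have s1 := summable_zTerm ω hω _ hz'
  have s2 := summable_zTerm ω hω _ hz
  rw [wzeta_eq ω hω _ hz', wzeta_eq ω hω _ hz, ← s1.tsum_sub s2]
  have s := s1.sub s2
  rw [s.tsum_prod]
  have hslice : ∀ m : ℤ, ∑' n : ℤ, (zTerm (z + ω) (latPt ω (m, n)) - zTerm z (latPt ω (m, n)))
      = (ω : ℂ)⁻¹ * e2Summand m tauH := by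
    intro m
    have sm := s.prod_factor m
    have e2 := (e2Summand_summable m tauH).mul_left (ω : ℂ)⁻¹
    set h : ℤ → ℂ := fun n => 1 / ((z - ω * (m * tau)) - ω * (n : ℂ)) with hh
    have key : ∀ n : ℤ, zTerm (z + ω) (latPt ω (m, n)) - zTerm z (latPt ω (m, n)) =
        (h (n - 1) - h n) + (ω : ℂ)⁻¹ * eisSummand 2 ![m, n] tauH := by
      intro n
      have e1 : (ω : ℂ) / (latPt ω (m, n)) ^ 2 = (ω : ℂ)⁻¹ * eisSummand 2 ![m, n] tauH := by
        simp only [eisSummand, latPt, coe_tauH]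
        rw [mul_pow, zpow_neg]
        simp
        field_simp
      have e2 : z + ω - latPt ω (m, n) = (z - ω * (m * tau)) - ω * ((n - 1 : ℤ) : ℂ) := by
        simp [latPt]; ring
      have e3 : z - latPt ω (m, n) = (z - ω * (m * tau)) - ω * (n : ℂ) := by
        simp [latPt]; ring
      rw [← e1, hh]
      simp only [zTerm]
      rw [e2, e3]
      ring
    simp only [key] at sm ⊢
    have sh : Summable fun n : ℤ => h (n - 1) - h n := by
      simpa using sm.sub e2
    rw [sh.tsum_add e2, telescoping h (tendsto_aux _ ω hω) sh, zero_add, tsum_mul_left]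
    rfl
  have so := s.prod
  simp only [hslice] at so ⊢
  have so' : Summable fun m => e2Summand m tauH := by
    simpa [hω0, ← mul_assoc] using so.mul_left (ω : ℂ)
  rw [tsum_mul_left, G2, tsum_eq_of_summable_unconditional
    (L := SummationFilter.symmetricIcc ℤ) so']
  rw [div_eq_inv_mul]

/-- The claimed quasi-period. -/
def etaVal (ω : ℝ) (α : ℂ) : ℂ :=
  2 * (Real.pi : ℂ) * (starRingEnd ℂ) α / ((Real.sqrt 3 : ℂ) * (ω : ℂ) ^ 2)

/-- The quasi-periodicity for a given period. -/
def QP (ω : ℝ) (α : ℂ) : Prop :=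
  inLattice ω α ∧ ∀ z, ¬ inLattice ω z → wzeta ω (z + α) - wzeta ω z = etaVal ω α

lemma QP.add {ω : ℝ} {α β : ℂ} (ha : QP ω α) (hb : QP ω β) : QP ω (α + β) := by
  refine ⟨inLattice_add ha.1 hb.1, fun z hz => ?_⟩
  have h1 := ha.2 z hz
  have h2 := hb.2 _ (not_inLattice_add ha.1 hz)
  have : etaVal ω (α + β) = etaVal ω α + etaVal ω β := by
    simp only [etaVal, map_add]; ring
  rw [this, ← h1, ← h2, add_assoc]; ring

lemma QP.neg {ω : ℝ} {α : ℂ} (ha : QP ω α) : QP ω (-α) := by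
  refine ⟨inLattice_neg ha.1, fun z hz => ?_⟩
  have h2 := ha.2 _ (not_inLattice_add (inLattice_neg ha.1) hz)
  have : etaVal ω (-α) = -etaVal ω α := by
    simp only [etaVal, map_neg]; ring
  rw [this, ← h2]; simp

lemma QP.zero (ω : ℝ) : QP ω 0 := ⟨⟨0, by simp⟩, fun z _ => by simp [etaVal]⟩

lemma QP.zmul {ω : ℝ} {α : ℂ} (ha : QP ω α) (n : ℤ) : QP ω (n * α) := by
  induction n using Int.induction_on with
  | zero => simpa using QP.zero ω
  | succ n ih => 
    have := ih.add ha
    convert this using 1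
    push_cast; ring
  | pred n ih =>
    have := ih.add ha.neg
    convert this using 1
    push_cast; ring

lemma QP.tau_mul {ω : ℝ} {α : ℂ} (ha : QP ω α) : QP ω (tau * α) := by
  have h0 := tau_ne_zero
  refine ⟨inLattice_mul tau_mem_Eis ha.1, fun z hz => ?_⟩
  have hz' : ¬ inLattice ω (tau⁻¹ * z) := fun h => hz (by
    simpa [h0] using inLattice_mul tau_mem_Eis h)
  have h1 := ha.2 _ hz'
  have e1 := wzeta_tau_mul ω (tau⁻¹ * z + α)
  have e2 := wzeta_tau_mul ω (tau⁻¹ * z)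
  rw [mul_add, mul_inv_cancel_left₀ h0] at e1
  rw [mul_inv_cancel_left₀ h0] at e2
  rw [e1, e2, ← mul_sub, h1, etaVal, etaVal, map_mul, tau_conj, tau_inv]
  ring

lemma QP.omega {ω : ℝ} (hω : 0 < ω) : QP ω ω := by
  have hω0 : (ω : ℂ) ≠ 0 := by exact_mod_cast hω.ne'
  refine ⟨inLattice_omega ω, fun z hz => ?_⟩
  rw [wzeta_add_omega ω hω z hz, G2_tau, etaVal, Complex.conj_ofReal]
  field_simp

/-- From [Qiu]: the quasi-periods of `ζ(·, L_ω)` are `η(α, L_ω) = ζ(z + α) − ζ(z) = 2π·ᾱ/(√3·ω²)` for `α ∈ L_ω` and `z ∉ L_ω`.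
Here `ω > 0` is pinned down by the differential equation `℘′² = 4℘³ − 1` for the
lattice `L_ω = ω·ℤ[τ]` (equivalently, the lattice invariants are `g₂ = 0`, `g₃ = 1`). -/
theorem wzeta_quasi_periods
    (ω : ℝ) (hω : 0 < ω)
    (hODE : ∀ z : ℂ, ¬ inLattice ω z → deriv (wp ω) z ^ 2 = 4 * wp ω z ^ 3 - 1) :
    ∀ α z : ℂ, inLattice ω α → ¬ inLattice ω z →
      wzeta ω (z + α) - wzeta ω z =
        2 * (Real.pi : ℂ) * (starRingEnd ℂ) α / ((Real.sqrt 3 : ℂ) * (ω : ℂ) ^ 2) := by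
  intro α z hα hz
  obtain ⟨⟨m, n⟩, rfl⟩ := (inLattice_iff ω α).1 hα
  have h : QP ω (latPt ω (m, n)) := by
    have := ((QP.omega hω).tau_mul.zmul m).add ((QP.omega hω).zmul n)
    convert this using 1
    simp only [latPt]; ring
  exact h.2 z hz
end
end
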